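/- arXiv:1607.01962 — 6 statements merged into one kernel-verified Lean document; each statement's English description precedes it below -/
import Mathlib

section
/- Let μ be a Borel probability measure on Circle admitting a sequence (p_n)_{n≥0} of orthonormal Laurent polynomials. Suppose there exist an integer r ≥ 1, Laurent polynomials D_0, ..., D_r with D_r not the zero Laurent polynomial, a natural number N, and a function λ : ℕ → ℂ such that for every n ≥ N and every z ∈ ℂ with z ≠ 0 one has Σ_{k=0}^r D_k(z)·p_n^{(k)}(z) = λ(n)·p_n(z). Then μ is the normalized Lebesgue (Haar) probability measure on Circle. -/
/-!
Write the operator as `L = Σ_k D_k ∂^k`, so that `L z^i = Σ_j Q_j(i) z^{i+j}` with polynomials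
`Q_j` (`shiftPoly`), and let `V_n` be the span of the first `n` monomials, which is also the span
of `p_0, …, p_{n-1}` (`IsOLP.monomialSpan_le_span`).

* All but finitely many `p_n` are eigenvectors, so `L V_n ⊆ V_n` for all large `n`
  (`IsOLP.exists_invariant`). Applied to the extreme monomials `z^t` and `z^{-t}`, this gives
  `Q_j = 0` for `j ≠ 0` (`shiftPoly_eq_zero`): `L` is diagonal, `L z^i = Q_0(i) z^i`. As
  `D_r ≠ 0`, the polynomial `Q_0` has degree `r ≥ 1` (`natDegree_shiftPoly`).
* For `n ≥ N` every monomial `z^i` occurring in `p_n` then satisfies `Q_0(i) = Q_0(σ(n))`. A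
  nonconstant polynomial takes infinitely many values on `ℤ`, so for infinitely many `n` the value
  `Q_0(σ(n))` differs from all `Q_0(σ(k))`, `k < n` (`exists_new_value`); for such `n`, `p_n` is a
  multiple of `z^{σ(n)}`.
* Orthogonality of this monomial to `V_n` kills the moments `∫ z^{σ(n)-i} dμ`, `z^i ∈ V_n`
  (`IsOLP.moment_eq_zero`). With `n` arbitrarily large and complex conjugation, all nontrivial
  moments vanish, and `μ` is Haar measure (`eq_haar_of_moments`).
-/

open MeasureTheory
open scoped ComplexConjugate

noncomputable section

/-- The function associated to a Laurent polynomial given by its finitely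
supported family of coefficients: `p(z) = Σ_{i ∈ ℤ} a_i z^i`. -/
def lval (a : ℤ →₀ ℂ) (z : ℂ) : ℂ := a.sum fun i c => c * z ^ i

/-- The ordering `1, z⁻¹, z, z⁻², z², …` of the monomials:
`σ(0) = 0`, `σ(2m) = m`, `σ(2m−1) = −m`. -/
def olpIdx (n : ℕ) : ℤ := if n % 2 = 0 then ((n / 2 : ℕ) : ℤ) else -(((n + 1) / 2 : ℕ) : ℤ)

/-- The Borel measurable structure on the unit circle. -/
instance : MeasurableSpace Circle := borel Circle

instance : BorelSpace Circle := ⟨rfl⟩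

/-- `p` is a sequence of orthonormal Laurent polynomials for the measure `μ` on the
unit circle: the `p n` are orthonormal in `L²(μ)`, `p n` is a linear combination of
the monomials `z^{σ(0)}, …, z^{σ(n)}`, and the coefficient of `z^{σ(n)}` is nonzero. -/
def IsOLP (μ : Measure Circle) (p : ℕ → (ℤ →₀ ℂ)) : Prop :=
  (∀ n k : ℕ, ∫ z : Circle, lval (p n) (z : ℂ) * conj (lval (p k) (z : ℂ)) ∂μ
      = if n = k then 1 else 0)
  ∧ (∀ n : ℕ, ∀ i ∈ (p n).support, i ∈ (Finset.range (n + 1)).image olpIdx)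
  ∧ (∀ n : ℕ, p n (olpIdx n) ≠ 0)

end

/-! ### The differential operator on coefficients -/

lemma lval_eq_linComb (a : ℤ →₀ ℂ) (z : ℂ) :
    lval a z = Finsupp.linearCombination ℂ (fun i : ℤ => z ^ i) a := rfl

/-- The polynomial `Q_j` for which the operator `Σ_k D_k ∂^k` sends `z^i` to
`Σ_j Q_j(i) z^{i+j}`. It uses `∂^k z^i = i(i-1)⋯(i-k+1) z^{i-k}`. -/
noncomputable def shiftPoly (r : ℕ) (D : ℕ → (ℤ →₀ ℂ)) (j : ℤ) : Polynomial ℂ :=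
  ∑ k ∈ Finset.range (r + 1), Polynomial.C (D k (j + k)) * descPochhammer ℂ k

/-- The operator `Σ_k D_k ∂^k` acting on coefficient families. -/
noncomputable def coeffOp (r : ℕ) (D : ℕ → (ℤ →₀ ℂ)) : (ℤ →₀ ℂ) →ₗ[ℂ] (ℤ →₀ ℂ) :=
  Finsupp.linearCombination ℂ fun i : ℤ =>
    ∑ k ∈ Finset.range (r + 1), (D k).sum fun l d =>
      Finsupp.single (i - k + l) (d * (descPochhammer ℂ k).eval (i : ℂ))

lemma coeffOp_single_apply (r : ℕ) (D : ℕ → (ℤ →₀ ℂ)) (i m : ℤ) :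
    coeffOp r D (Finsupp.single i 1) m = (shiftPoly r D (m - i)).eval (i : ℂ) := by
  simp only [coeffOp, Finsupp.linearCombination_single, one_smul, Finsupp.finsetSum_apply,
    shiftPoly, Polynomial.eval_finsetSum, Polynomial.eval_mul, Polynomial.eval_C]
  refine Finset.sum_congr rfl fun k _ => ?_
  rw [Finsupp.sum_apply, Finsupp.sum, Finset.sum_eq_single (m - i + k)]
  · rw [Finsupp.single_apply, if_pos (by ring)]
  · intro l _ hl
    rw [Finsupp.single_apply, if_neg]
    intro h
    exact hl (by rw [← h]; ring)
  · intro h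
    rw [Finsupp.notMem_support_iff.1 h]
    simp

lemma coeffOp_apply (r : ℕ) (D : ℕ → (ℤ →₀ ℂ)) (a : ℤ →₀ ℂ) (m : ℤ) :
    coeffOp r D a m = a.sum fun i c => c * (shiftPoly r D (m - i)).eval (i : ℂ) := by
  conv_lhs => rw [← Finsupp.sum_single a]
  simp only [Finsupp.sum, map_sum, Finsupp.finsetSum_apply]
  refine Finset.sum_congr rfl fun i _ => ?_
  rw [← coeffOp_single_apply, ← mul_one (a i), ← smul_eq_mul, ← Finsupp.smul_single, map_smul]
  simp

lemma iteratedDeriv_lval (a : ℤ →₀ ℂ) (k : ℕ) {z : ℂ} (hz : z ≠ 0) :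
    iteratedDeriv k (lval a) z =
      a.sum fun i c => c * ((descPochhammer ℂ k).eval (i : ℂ) * z ^ (i - k)) := by
  have h : lval a = fun z => ∑ i ∈ a.support, a i * z ^ i := rfl
  have hc (i : ℤ) : ContDiffAt ℂ k (fun z : ℂ => z ^ i) z :=
    (analyticAt_id.zpow hz).contDiffAt
  rw [h, iteratedDeriv_fun_sum (fun i _ => contDiffAt_const.mul (hc i))]
  refine Finset.sum_congr rfl fun i _ => ?_
  rw [iteratedDeriv_const_mul_field, iteratedDeriv_eq_iterate, iter_deriv_zpow]
  simp only [descPochhammer_eval_eq_prod_range]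

/-- `coeffOp` does represent the differential operator away from the origin. -/
lemma lval_coeffOp (r : ℕ) (D : ℕ → (ℤ →₀ ℂ)) (a : ℤ →₀ ℂ) {z : ℂ} (hz : z ≠ 0) :
    lval (coeffOp r D a) z =
      ∑ k ∈ Finset.range (r + 1), lval (D k) z * iteratedDeriv k (lval a) z := by
  simp only [iteratedDeriv_lval a _ hz]
  rw [lval_eq_linComb, coeffOp, Finsupp.linearCombination_apply ℂ a, Finsupp.sum, map_sum]
  simp only [Finsupp.sum, Finset.mul_sum, lval]
  rw [Finset.sum_comm]
  refine Finset.sum_congr rfl fun i _ => ?_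
  simp only [map_smul, map_sum, Finsupp.linearCombination_single, smul_eq_mul, Finset.mul_sum,
    Finset.sum_mul]
  refine Finset.sum_congr rfl fun k _ => Finset.sum_congr rfl fun l _ => ?_
  rw [zpow_add₀ hz]
  ring

/-- A Laurent polynomial is determined by its function: distinct monomials are distinct
characters of `ℂˣ`, so they are linearly independent. -/
lemma lval_injective {a b : ℤ →₀ ℂ} (h : ∀ z : ℂ, z ≠ 0 → lval a z = lval b z) : a = b := by
  have hinj : Function.Injective
      (fun i : ℤ => (Units.coeHom ℂ).comp (zpowGroupHom i : ℂˣ →* ℂˣ)) := by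
    intro i j hij
    have h2 := DFunLike.congr_fun hij (Units.mk0 (2 : ℂ) two_ne_zero)
    have h3 : (2 : ℂ) ^ i = 2 ^ j := by simpa using h2
    have h4 : (2 : ℝ) ^ i = 2 ^ j := by
      apply Complex.ofReal_injective
      push_cast
      exact h3
    exact zpow_right_injective₀ (by norm_num) (by norm_num) h4
  have hli := (linearIndependent_monoidHom ℂˣ ℂ).comp _ hinj
  refine hli ?_
  ext u
  have := h u u.ne_zero
  simpa [Finsupp.linearCombination_apply, Finsupp.sum, lval] using this

/-! ### The filtration by the first monomials -/

lemma olpIdx_two_mul (t : ℕ) : olpIdx (2 * t) = t := by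
  unfold olpIdx; split_ifs <;> omega

lemma olpIdx_two_mul_add_one (t : ℕ) : olpIdx (2 * t + 1) = -(t + 1 : ℤ) := by
  unfold olpIdx; split_ifs <;> omega

lemma mem_olpIdx_image_odd (t : ℕ) (i : ℤ) :
    i ∈ olpIdx '' Set.Iio (2 * t + 1) ↔ -(t : ℤ) ≤ i ∧ i ≤ t := by
  constructor
  · rintro ⟨k, hk, rfl⟩
    have : k < 2 * t + 1 := hk
    unfold olpIdx; split_ifs <;> omega
  · rintro ⟨h1, h2⟩
    rcases le_or_gt 0 i with h | h
    · exact ⟨2 * i.toNat, by simp only [Set.mem_Iio]; omega, by rw [olpIdx_two_mul]; omega⟩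
    · exact ⟨2 * (-i - 1).toNat + 1, by simp only [Set.mem_Iio]; omega,
        by rw [olpIdx_two_mul_add_one]; omega⟩

lemma mem_olpIdx_image_even (t : ℕ) (i : ℤ) :
    i ∈ olpIdx '' Set.Iio (2 * t) ↔ -(t : ℤ) ≤ i ∧ i < t := by
  constructor
  · rintro ⟨k, hk, rfl⟩
    have : k < 2 * t := hk
    unfold olpIdx; split_ifs <;> omega
  · rintro ⟨h1, h2⟩
    rcases le_or_gt 0 i with h | h
    · exact ⟨2 * i.toNat, by simp only [Set.mem_Iio]; omega, by rw [olpIdx_two_mul]; omega⟩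
    · exact ⟨2 * (-i - 1).toNat + 1, by simp only [Set.mem_Iio]; omega,
        by rw [olpIdx_two_mul_add_one]; omega⟩

/-- The space `V_n` of Laurent polynomials spanned by the first `n` monomials
`z^{σ(0)}, …, z^{σ(n-1)}`. -/
noncomputable def monomialSpan (n : ℕ) : Submodule ℂ (ℤ →₀ ℂ) :=
  Finsupp.supported ℂ ℂ (olpIdx '' Set.Iio n)

lemma monomialSpan_mono {m n : ℕ} (h : m ≤ n) : monomialSpan m ≤ monomialSpan n :=
  Finsupp.supported_mono (Set.image_mono (Set.Iio_subset_Iio h))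

lemma single_mem_monomialSpan {n : ℕ} {i : ℤ} (hi : i ∈ olpIdx '' Set.Iio n) (c : ℂ) :
    Finsupp.single i c ∈ monomialSpan n :=
  Finsupp.single_mem_supported ℂ c hi

lemma apply_eq_zero_of_mem_monomialSpan {n : ℕ} {a : ℤ →₀ ℂ} (ha : a ∈ monomialSpan n) {i : ℤ}
    (hi : i ∉ olpIdx '' Set.Iio n) : a i = 0 :=
  (Finsupp.mem_supported' ℂ a).1 ha i hi

lemma exists_mem_monomialSpan (a : ℤ →₀ ℂ) : ∃ n, a ∈ monomialSpan n := by
  refine ⟨2 * (a.support.sup Int.natAbs) + 1, ?_⟩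
  intro i hi
  have : i.natAbs ≤ a.support.sup Int.natAbs := Finset.le_sup (f := Int.natAbs) hi
  rw [mem_olpIdx_image_odd]
  omega

section

variable {μ : Measure Circle} {p : ℕ → (ℤ →₀ ℂ)}

lemma IsOLP.mem_monomialSpan (hp : IsOLP μ p) {k n : ℕ} (h : k < n) : p k ∈ monomialSpan n := by
  intro i hi
  obtain ⟨j, hj, rfl⟩ := Finset.mem_image.1 (hp.2.1 k i hi)
  exact ⟨j, by simp only [Finset.mem_range] at hj; simp only [Set.mem_Iio]; omega, rfl⟩

/-- The family `p` is triangular with respect to the monomials, so `p_0, …, p_{n-1}` span `V_n`. -/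
lemma IsOLP.monomialSpan_le_span (hp : IsOLP μ p) (n : ℕ) :
    monomialSpan n ≤ Submodule.span ℂ (p '' Set.Iio n) := by
  induction n with
  | zero => simp [monomialSpan]
  | succ n ih =>
    have hmono : Submodule.span ℂ (p '' Set.Iio n) ≤ Submodule.span ℂ (p '' Set.Iio (n + 1)) :=
      Submodule.span_mono (Set.image_mono (Set.Iio_subset_Iio n.le_succ))
    intro a ha
    set c := a (olpIdx n) / p n (olpIdx n) with hc
    have hsub : a - c • p n ∈ monomialSpan n := by
      refine (Finsupp.mem_supported' ℂ _).2 fun i hi => ?_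
      rw [Finsupp.sub_apply, Finsupp.smul_apply, smul_eq_mul]
      by_cases hin : i = olpIdx n
      · rw [hin, hc, div_mul_cancel₀ _ (hp.2.2 n), sub_self]
      · have hi' : i ∉ olpIdx '' Set.Iio (n + 1) := by
          rintro ⟨k, hk, rfl⟩
          rcases (Nat.lt_succ_iff_lt_or_eq.1 hk) with h | rfl
          · exact hi ⟨k, h, rfl⟩
          · exact hin rfl
        rw [apply_eq_zero_of_mem_monomialSpan ha hi',
          apply_eq_zero_of_mem_monomialSpan (hp.mem_monomialSpan n.lt_succ_self) hi']
        simp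
    have : a = (a - c • p n) + c • p n := by abel
    rw [this]
    exact Submodule.add_mem _ (hmono (ih hsub))
      (Submodule.smul_mem _ _ (Submodule.subset_span ⟨n, Nat.lt_succ_self n, rfl⟩))

/-- An operator having all but finitely many `p_n` as eigenvectors preserves `V_n` for large
`n`: the finitely many exceptional images lie in a fixed `V_M`. -/
lemma IsOLP.exists_invariant (hp : IsOLP μ p) (L : (ℤ →₀ ℂ) →ₗ[ℂ] (ℤ →₀ ℂ)) (N : ℕ) (lam : ℕ → ℂ)
    (hL : ∀ n, N ≤ n → L (p n) = lam n • p n) :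
    ∃ M, ∀ n, M ≤ n → ∀ a ∈ monomialSpan n, L a ∈ monomialSpan n := by
  choose b hb using fun k => exists_mem_monomialSpan (L (p k))
  refine ⟨(Finset.range N).sup b, fun n hn a ha => ?_⟩
  have hle : Submodule.span ℂ (p '' Set.Iio n) ≤ (monomialSpan n).comap L := by
    rw [Submodule.span_le]
    rintro _ ⟨k, hk, rfl⟩
    change L (p k) ∈ monomialSpan n
    rcases lt_or_ge k N with h | h
    · exact monomialSpan_mono ((Finset.le_sup (f := b) (Finset.mem_range.2 h)).trans hn) (hb k)
    · rw [hL k h]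
      exact Submodule.smul_mem _ _ (hp.mem_monomialSpan hk)
  exact hle (hp.monomialSpan_le_span n ha)

/-! ### Diagonality of the operator and values of its symbol -/

lemma eq_zero_of_eventually_eval_eq_zero (Q : Polynomial ℂ) (f : ℕ → ℂ)
    (hf : Function.Injective f) (M : ℕ) (h : ∀ t, M ≤ t → Q.eval (f t) = 0) : Q = 0 := by
  refine Polynomial.eq_zero_of_infinite_isRoot Q ?_
  exact ((Set.Ici_infinite M).image hf.injOn).mono
    (by rintro _ ⟨t, ht, rfl⟩; exact h t ht)

/-- Preserving the spaces `V_n` for all large `n` forces a differential operator to be a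
polynomial in `z d/dz`: the component raising degrees by `j > 0` would push `z^t` out of
`span (z^{-t}, …, z^t)`, and dually for `j < 0` and `z^{-t}` in `span (z^{-t}, …, z^{t-1})`. -/
lemma shiftPoly_eq_zero {r : ℕ} {D : ℕ → (ℤ →₀ ℂ)} {M : ℕ}
    (hM : ∀ n, M ≤ n → ∀ a ∈ monomialSpan n, coeffOp r D a ∈ monomialSpan n) {j : ℤ}
    (hj : j ≠ 0) : shiftPoly r D j = 0 := by
  rcases lt_or_gt_of_ne hj with hneg | hpos
  · refine eq_zero_of_eventually_eval_eq_zero _ (fun t => ((-(t + 1 : ℤ) : ℤ) : ℂ))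
      (fun s t h => by simpa using h) M fun t ht => ?_
    have h1 := hM (2 * (t + 1)) (by omega) (Finsupp.single (-(t + 1 : ℤ)) 1)
      (single_mem_monomialSpan ((mem_olpIdx_image_even _ _).2 (by push_cast; omega)) 1)
    have h2 := apply_eq_zero_of_mem_monomialSpan h1 (i := -(t + 1 : ℤ) + j)
      (by rw [mem_olpIdx_image_even]; push_cast; omega)
    rwa [coeffOp_single_apply, add_sub_cancel_left] at h2
  · refine eq_zero_of_eventually_eval_eq_zero _ (fun t => ((t : ℤ) : ℂ))
      (fun s t h => by simpa using h) M fun t ht => ?_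
    have h1 := hM (2 * t + 1) (by omega) (Finsupp.single (t : ℤ) 1)
      (single_mem_monomialSpan ((mem_olpIdx_image_odd _ _).2 (by omega)) 1)
    have h2 := apply_eq_zero_of_mem_monomialSpan h1 (i := (t : ℤ) + j)
      (by rw [mem_olpIdx_image_odd]; omega)
    rwa [coeffOp_single_apply, add_sub_cancel_left] at h2

lemma natDegree_shiftPoly {r : ℕ} {D : ℕ → (ℤ →₀ ℂ)} {j : ℤ} (h : D r (j + r) ≠ 0) :
    (shiftPoly r D j).natDegree = r := by
  have hcoeff : (shiftPoly r D j).coeff r = D r (j + r) := by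
    have hlow (k : ℕ) (hk : k ∈ Finset.range r) :
        (Polynomial.C (D k (j + k)) * descPochhammer ℂ k).coeff r = 0 := by
      rw [Polynomial.coeff_C_mul, Polynomial.coeff_eq_zero_of_natDegree_lt, mul_zero]
      rw [descPochhammer_natDegree]
      exact Finset.mem_range.1 hk
    have htop : (descPochhammer ℂ r).coeff r = 1 := by
      have := monic_descPochhammer ℂ r
      rwa [Polynomial.Monic, Polynomial.leadingCoeff, descPochhammer_natDegree] at this
    rw [shiftPoly, Finset.sum_range_succ, Polynomial.coeff_add, Polynomial.finsetSum_coeff,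
      Finset.sum_eq_zero hlow, Polynomial.coeff_C_mul, htop]
    simp
  refine le_antisymm ?_ (Polynomial.le_natDegree_of_ne_zero (by rwa [hcoeff]))
  refine Polynomial.natDegree_sum_le_of_forall_le _ _ fun k hk => ?_
  refine (Polynomial.natDegree_C_mul_le _ _).trans ?_
  rw [descPochhammer_natDegree]
  exact Nat.lt_succ_iff.1 (Finset.mem_range.1 hk)

/-- A nonconstant polynomial takes infinitely many values on `ℤ`, so along the enumeration `σ`
a value not seen before occurs at arbitrarily large indices. -/
lemma exists_new_value {Q : Polynomial ℂ} (hQ : Q.natDegree ≠ 0) (M : ℕ) :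
    ∃ n, M ≤ n ∧ ∀ k < n, Q.eval (olpIdx k : ℂ) ≠ Q.eval (olpIdx n : ℂ) := by
  by_contra! hcon
  have hfin : ∀ n, Q.eval (olpIdx n : ℂ) ∈
      (Finset.range M).image fun k => Q.eval (olpIdx k : ℂ) := by
    intro n
    induction n using Nat.strong_induction_on with
    | _ n ih =>
      rcases lt_or_ge n M with h | h
      · exact Finset.mem_image_of_mem _ (Finset.mem_range.2 h)
      · obtain ⟨k, hk, heq⟩ := hcon n h
        exact heq ▸ ih k hk
  -- The product of `Q - v` over the finitely many values `v` vanishes on all of `ℕ`.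
  set S := (Finset.range M).image fun k => Q.eval (olpIdx k : ℂ)
  have hprod : ∏ v ∈ S, (Q - Polynomial.C v) = 0 := by
    refine eq_zero_of_eventually_eval_eq_zero _ (fun t => ((t : ℤ) : ℂ))
      (fun s t h => by simpa using h) 0 fun t _ => ?_
    rw [Polynomial.eval_prod]
    refine Finset.prod_eq_zero (hfin (2 * t)) ?_
    simp [olpIdx_two_mul]
  obtain ⟨v, -, hv⟩ := Finset.prod_eq_zero_iff.1 hprod
  apply hQ
  rw [sub_eq_zero.1 hv, Polynomial.natDegree_C]

/-! ### Orthogonality and moments -/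

lemma integrable_lval_mul_conj (μ : Measure Circle) [IsProbabilityMeasure μ] (a b : ℤ →₀ ℂ) :
    Integrable (fun z : Circle => lval a (z : ℂ) * conj (lval b (z : ℂ))) μ := by
  have hc (a : ℤ →₀ ℂ) : Continuous fun z : Circle => lval a (z : ℂ) := by
    unfold lval Finsupp.sum
    refine continuous_finsetSum _ fun i _ => continuous_const.mul ?_
    exact continuous_subtype_val.zpow₀ i fun z => Or.inl (Circle.coe_ne_zero z)
  exact Continuous.integrable_of_hasCompactSupport
    ((hc a).mul (Complex.continuous_conj.comp (hc b))) (HasCompactSupport.of_compactSpace _)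

/-- `p_n` is orthogonal to `V_n`, not just to `p_0, …, p_{n-1}`. -/
lemma IsOLP.orthogonal (hp : IsOLP μ p) [IsProbabilityMeasure μ] {n : ℕ} {a : ℤ →₀ ℂ}
    (ha : a ∈ monomialSpan n) :
    ∫ z : Circle, lval (p n) (z : ℂ) * conj (lval a (z : ℂ)) ∂μ = 0 := by
  refine Submodule.span_induction (p := fun a _ =>
    ∫ z : Circle, lval (p n) (z : ℂ) * conj (lval a (z : ℂ)) ∂μ = 0) ?_ ?_ ?_ ?_
    (hp.monomialSpan_le_span n ha)
  · rintro _ ⟨k, hk, rfl⟩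
    rw [hp.1 n k, if_neg (ne_of_gt hk)]
  · simp [lval]
  · intro a b _ _ h1 h2
    have : ∀ z : Circle, lval (p n) (z : ℂ) * conj (lval (a + b) (z : ℂ)) =
        lval (p n) (z : ℂ) * conj (lval a (z : ℂ)) +
          lval (p n) (z : ℂ) * conj (lval b (z : ℂ)) := by
      intro z
      rw [lval_eq_linComb (a + b), map_add, map_add, mul_add]
      rfl
    simp only [this]
    rw [integral_add (integrable_lval_mul_conj μ _ _) (integrable_lval_mul_conj μ _ _), h1, h2,
      add_zero]
  · intro c a _ h
    have : ∀ z : Circle, lval (p n) (z : ℂ) * conj (lval (c • a) (z : ℂ)) =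
        conj c * (lval (p n) (z : ℂ) * conj (lval a (z : ℂ))) := by
      intro z
      rw [lval_eq_linComb (c • a), map_smul, smul_eq_mul, map_mul, ← lval_eq_linComb]
      ring
    simp only [this]
    rw [integral_const_mul, h, mul_zero]

/-- If `p_n` is a multiple of the single monomial `z^{σ(n)}`, its orthogonality to `z^i ∈ V_n`
says that the moment of order `σ(n) - i` vanishes. -/
lemma IsOLP.moment_eq_zero (hp : IsOLP μ p) [IsProbabilityMeasure μ] {n : ℕ} {c : ℂ}
    (hn : p n = Finsupp.single (olpIdx n) c) {i : ℤ} (hi : i ∈ olpIdx '' Set.Iio n) :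
    ∫ z : Circle, (z : ℂ) ^ (olpIdx n - i) ∂μ = 0 := by
  have hc : c ≠ 0 := by
    have := hp.2.2 n
    rwa [hn, Finsupp.single_eq_same] at this
  have h := hp.orthogonal (single_mem_monomialSpan hi 1)
  rw [hn] at h
  have hz : ∀ z : Circle, lval (Finsupp.single (olpIdx n) c) (z : ℂ) *
      conj (lval (Finsupp.single i 1) (z : ℂ)) = c * (z : ℂ) ^ (olpIdx n - i) := by
    intro z
    simp only [lval, Finsupp.sum_single_index, zero_mul, one_mul, map_zpow₀]
    rw [← Circle.coe_inv_eq_conj, Circle.coe_inv, inv_zpow, ← zpow_neg, mul_assoc,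
      ← zpow_add₀ z.coe_ne_zero, sub_eq_add_neg]
  simp only [hz] at h
  rw [integral_const_mul] at h
  exact (mul_eq_zero.1 h).resolve_left hc

end

lemma integral_zpow_neg (μ : Measure Circle) (j : ℤ) :
    ∫ z : Circle, (z : ℂ) ^ (-j) ∂μ = conj (∫ z : Circle, (z : ℂ) ^ j ∂μ) := by
  rw [← integral_conj]
  refine integral_congr_ae (.of_forall fun z => ?_)
  simp only [map_zpow₀]
  rw [← Circle.coe_inv_eq_conj, Circle.coe_inv, inv_zpow, zpow_neg]

lemma integral_zpow_haar {j : ℤ} (hj : j ≠ 0) :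
    ∫ z : Circle, (z : ℂ) ^ j ∂(Measure.haarMeasure (⊤ : TopologicalSpace.PositiveCompacts Circle))
      = 0 := by
  -- Translate by `w` with `w ^ j = -1`.
  set w : Circle := Circle.exp (Real.pi / j) with hw
  have hwj : (w : ℂ) ^ j = -1 := by
    have hj' : (j : ℂ) ≠ 0 := by exact_mod_cast hj
    rw [hw, Circle.coe_exp, ← Complex.exp_int_mul, ← Complex.exp_pi_mul_I]
    congr 1
    push_cast
    field_simp
  have h := integral_mul_left_eq_self
    (μ := Measure.haarMeasure (⊤ : TopologicalSpace.PositiveCompacts Circle))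
    (fun z : Circle => (z : ℂ) ^ j) w
  simp only [Circle.coe_mul, mul_zpow, hwj] at h
  rw [integral_const_mul] at h
  linear_combination (-1 / 2 : ℂ) * h

instance : IsProbabilityMeasure
    (Measure.haarMeasure (⊤ : TopologicalSpace.PositiveCompacts Circle)) :=
  ⟨by simpa using Measure.haarMeasure_self (K₀ := (⊤ : TopologicalSpace.PositiveCompacts Circle))⟩

/-- Trigonometric polynomials are dense by Stone–Weierstrass, so a probability measure on the
circle all of whose nontrivial moments vanish is Haar measure. -/
lemma eq_haar_of_moments (μ : Measure Circle) [IsProbabilityMeasure μ]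
    (h : ∀ j : ℤ, j ≠ 0 → ∫ z : Circle, (z : ℂ) ^ j ∂μ = 0) : μ = Measure.haarMeasure ⊤ := by
  let e : BoundedContinuousFunction Circle ℂ :=
    BoundedContinuousFunction.mkOfCompact ⟨fun z : Circle => (z : ℂ), continuous_subtype_val⟩
  refine ext_of_forall_mem_subalgebra_integral_eq_of_polish (𝕜 := ℂ)
    (A := StarAlgebra.adjoin ℂ {e}) ?_ ?_
  · intro x y hxy
    refine ⟨_, ⟨_, ⟨e, StarAlgebra.subset_adjoin ℂ _ rfl, rfl⟩, rfl⟩, ?_⟩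
    exact fun hxy' => hxy (Circle.ext hxy')
  · intro g hg
    have hg' : g ∈ Submodule.span ℂ (Submonoid.closure ({e} ∪ star {e}) :
        Set (BoundedContinuousFunction Circle ℂ)) := by
      rw [← StarAlgebra.adjoin_eq_span]
      exact hg
    clear hg
    have hint (ν : Measure Circle) [IsProbabilityMeasure ν]
        (f : BoundedContinuousFunction Circle ℂ) : Integrable f ν := f.integrable ν
    induction hg' using Submodule.span_induction with
    | mem f hf =>
      have hpow : ∃ j : ℤ, ∀ z : Circle, f z = (z : ℂ) ^ j := by
        refine Submonoid.closure_induction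
          (motive := fun f _ => ∃ j : ℤ, ∀ z : Circle, f z = (z : ℂ) ^ j) ?_ ⟨0, by simp⟩ ?_ hf
        · rintro f (hf | hf)
          · obtain rfl := hf
            exact ⟨1, fun z => (zpow_one _).symm⟩
          · have hf' : star f = e := hf
            obtain rfl : f = star e := by rw [← hf', star_star]
            refine ⟨-1, fun z => ?_⟩
            rw [zpow_neg_one, ← Circle.coe_inv, Circle.coe_inv_eq_conj]
            rfl
        · rintro f g - - ⟨i, hi⟩ ⟨j, hj⟩
          refine ⟨i + j, fun z => ?_⟩
          rw [zpow_add₀ z.coe_ne_zero, ← hi, ← hj]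
          rfl
      obtain ⟨j, hj⟩ := hpow
      simp only [hj]
      rcases eq_or_ne j 0 with rfl | hj0
      · simp
      · rw [h j hj0, integral_zpow_haar hj0]
    | zero => simp
    | add f g _ _ hf hg =>
      simp only [BoundedContinuousFunction.coe_add, Pi.add_apply]
      rw [integral_add (hint _ f) (hint _ g), integral_add (hint _ f) (hint _ g), hf, hg]
    | smul c f _ hf =>
      simp only [BoundedContinuousFunction.coe_smul, smul_eq_mul]
      rw [integral_const_mul, integral_const_mul, hf]

/-- The CMV bispectral problem: if, from some index on, the orthonormal Laurent
polynomials of `μ` are eigenfunctions of a linear differential operator with Laurent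
polynomial coefficients, then `μ` is the Haar probability measure on the circle. -/
theorem olp_bispectral_eventually_eigen_haar
    (μ : Measure Circle) (hμ : IsProbabilityMeasure μ)
    (p : ℕ → (ℤ →₀ ℂ)) (hp : IsOLP μ p)
    (r : ℕ) (hr : 1 ≤ r) (D : ℕ → (ℤ →₀ ℂ)) (hD : D r ≠ 0)
    (N : ℕ) (lam : ℕ → ℂ)
    (heig : ∀ n : ℕ, N ≤ n → ∀ z : ℂ, z ≠ 0 →
      ∑ k ∈ Finset.range (r + 1), lval (D k) z * iteratedDeriv k (lval (p n)) z
        = lam n * lval (p n) z) :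
    μ = Measure.haarMeasure ⊤ := by
  have hL : ∀ n, N ≤ n → coeffOp r D (p n) = lam n • p n := by
    intro n hn
    refine lval_injective fun z hz => ?_
    rw [lval_coeffOp r D _ hz, heig n hn z hz, lval_eq_linComb (lam n • p n), map_smul]
    rfl
  obtain ⟨M, hM⟩ := hp.exists_invariant _ N lam hL
  have hQ : ∀ j : ℤ, j ≠ 0 → shiftPoly r D j = 0 := fun j => shiftPoly_eq_zero hM
  -- The shift carrying a nonzero coefficient of `D_r` must be `0`, so `Q_0` has degree `r`.
  have hdeg : (shiftPoly r D 0).natDegree ≠ 0 := by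
    obtain ⟨l, hl⟩ := Finsupp.ne_iff.1 hD
    have hd : (shiftPoly r D (l - r)).natDegree = r := natDegree_shiftPoly (by simpa using hl)
    have hlr : l - r = 0 := by
      by_contra hne
      rw [hQ _ hne, Polynomial.natDegree_zero] at hd
      omega
    rw [hlr] at hd
    omega
  have hdiag : ∀ (a : ℤ →₀ ℂ) (m : ℤ),
      coeffOp r D a m = a m * (shiftPoly r D 0).eval (m : ℂ) := by
    intro a m
    rw [coeffOp_apply, Finsupp.sum, Finset.sum_eq_single m]
    · rw [sub_self]
    · intro i _ hi
      rw [hQ _ (sub_ne_zero.2 hi.symm), Polynomial.eval_zero, mul_zero]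
    · intro hm
      rw [Finsupp.notMem_support_iff.1 hm, zero_mul]
  have hsupp : ∀ n, N ≤ n → ∀ m : ℤ, p n m ≠ 0 →
      (shiftPoly r D 0).eval (m : ℂ) = lam n := by
    intro n hn m hm
    have h := DFunLike.congr_fun (hL n hn) m
    rw [hdiag, Finsupp.smul_apply, smul_eq_mul, mul_comm] at h
    exact mul_right_cancel₀ hm h
  refine eq_haar_of_moments μ fun j hj => ?_
  obtain ⟨n, hn, hnew⟩ := exists_new_value hdeg (max N (2 * j.natAbs + 2))
  have hmono : p n = Finsupp.single (olpIdx n) (p n (olpIdx n)) := by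
    ext m
    rw [Finsupp.single_apply]
    split_ifs with hm
    · rw [hm]
    · by_contra hne
      obtain ⟨k, hk, rfl⟩ := Finset.mem_image.1 (hp.2.1 n m (Finsupp.mem_support_iff.2 hne))
      have hkn : k ≠ n := fun h => hm (h ▸ rfl)
      have hk' := Finset.mem_range.1 hk
      have hN : N ≤ n := (le_max_left _ _).trans hn
      exact hnew k (by omega) ((hsupp n hN _ hne).trans (hsupp n hN _ (hp.2.2 n)).symm)
  have hn2 : 2 * j.natAbs + 2 ≤ n := (le_max_right _ _).trans hn
  have habs := Int.abs_eq_natAbs j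
  have hpos := Int.natAbs_pos.2 hj
  -- It suffices to treat either sign of the exponent: the other one follows by conjugation.
  have hsign : ∀ i : ℤ, (i = j ∨ i = -j) →
      ∫ z : Circle, (z : ℂ) ^ i ∂μ = 0 → ∫ z : Circle, (z : ℂ) ^ j ∂μ = 0 := by
    rintro i (rfl | rfl) hi
    · exact hi
    · rw [integral_zpow_neg] at hi
      simpa using hi
  obtain ⟨t, rfl | rfl⟩ := Nat.even_or_odd' n
  · have h := hp.moment_eq_zero hmono (i := olpIdx (2 * t) - |j|)
      ((mem_olpIdx_image_even _ _).2 (by rw [olpIdx_two_mul]; omega))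
    rw [sub_sub_cancel] at h
    exact hsign _ (abs_choice j) h
  · have h := hp.moment_eq_zero hmono (i := olpIdx (2 * t + 1) + |j|)
      ((mem_olpIdx_image_odd _ _).2 (by rw [olpIdx_two_mul_add_one]; omega))
    rw [sub_add_cancel_left] at h
    refine hsign _ ?_ h
    rcases abs_choice j with h | h <;> rw [h] <;> simp
end

section
/- Let R be a star ring, let l, m ∈ R be unitary, and set c = l·m. Then for every n ∈ ℕ and every Ω ∈ R, (ad_n c)(star Ω) = star((ad_n c) Ω). In particular, if star Ω = Ω then (ad_n c)Ω is fixed by star. -/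
/-!
Write `c = l * m`, which is unitary. Applying `star` to a commutator gives
`star (c X - X c) = star c * (c (star X) - (star X) c) * star c`, and `star c = c⁻¹` commutes
with `c`, hence multiplication by it commutes with `ad c`; so each application of `ad c` contributes one factor `star c`
on either side (`star_ad_iterate`). The outer factors
`star c ^ q` of `hermAd`, with `q = n / 2`, become `c ^ q` under `star` and cancel `q` of these `n`
factors on each side, leaving `q` of them for `n = 2 q` and `q + 1` for `n = 2 q + 1`. In the odd
case the extra `star c = star m * star l` is cancelled by `m` on the left to `star l` and by `l` on
the right to `star m`.
-/

/-- The Hermitian ad-operator `(ad_n c)` associated to the factorization `c = l·m`: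
for even `n = 2q`, `(ad_n c)Ω = star(c)^q · ((ad c)^n Ω) · star(c)^q`;
for odd `n = 2q+1`, `(ad_n c)Ω = star l · star(c)^q · ((ad c)^n Ω) · star(c)^q · star m`. -/
def hermAd {R : Type*} [Ring R] [StarRing R] (l m : R) (n : ℕ) (Ω : R) : R :=
  if n % 2 = 0 then
    star (l * m) ^ (n / 2) * ((fun X => (l * m) * X - X * (l * m))^[n] Ω)
      * star (l * m) ^ (n / 2)
  else
    star l * star (l * m) ^ (n / 2) * ((fun X => (l * m) * X - X * (l * m))^[n] Ω)
      * star (l * m) ^ (n / 2) * star m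

/-- Applying `star` to the iterated commutator costs `n` factors `star c` on each side. -/
lemma star_ad_iterate {R : Type*} [Ring R] [StarRing R] (c : R) (hc : c ∈ unitary R)
    (n : ℕ) (Ω : R) :
    star ((fun X => c * X - X * c)^[n] Ω)
      = star c ^ n * ((fun X => c * X - X * c)^[n] (star Ω)) * star c ^ n := by
  induction n with
  | zero => simp
  | succ n ih =>
    simp only [Function.iterate_succ_apply', star_sub, star_mul]
    rw [ih]
    generalize (fun X => c * X - X * c)^[n] (star Ω) = Y
    have h₁ : star c ^ (n + 1) * c = star c ^ n := by
      rw [pow_succ, mul_assoc, Unitary.star_mul_self_of_mem hc, mul_one]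
    have h₂ : c * star c ^ (n + 1) = star c ^ n := by
      rw [pow_succ', ← mul_assoc, Unitary.mul_star_self_of_mem hc, one_mul]
    calc star c ^ n * Y * star c ^ n * star c - star c * (star c ^ n * Y * star c ^ n)
        = star c ^ n * Y * star c ^ (n + 1) - star c ^ (n + 1) * Y * star c ^ n := by
          rw [mul_assoc _ _ (star c), ← pow_succ, ← mul_assoc, ← mul_assoc, ← pow_succ']
      _ = (star c ^ (n + 1) * c) * Y * star c ^ (n + 1)
          - star c ^ (n + 1) * Y * (c * star c ^ (n + 1)) := by rw [h₁, h₂]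
      _ = star c ^ (n + 1) * (c * Y - Y * c) * star c ^ (n + 1) := by noncomm_ring

lemma pow_mul_star_pow {R : Type*} [Ring R] [StarRing R] {c : R} (hc : c ∈ unitary R)
    (q k : ℕ) : c ^ q * star c ^ (q + k) = star c ^ k := by
  rw [pow_add, ← mul_assoc, ← star_pow, Unitary.mul_star_self_of_mem (pow_mem hc q), one_mul]

lemma star_pow_mul_pow {R : Type*} [Ring R] [StarRing R] {c : R} (hc : c ∈ unitary R)
    (q k : ℕ) : star c ^ (k + q) * c ^ q = star c ^ k := by
  rw [pow_add, mul_assoc, ← star_pow c q, Unitary.star_mul_self_of_mem (pow_mem hc q), mul_one]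

lemma hermAd_star_aux {R : Type*} [Ring R] [StarRing R]
    (l m : R) (hl : l ∈ unitary R) (hm : m ∈ unitary R) (n : ℕ) (Ω : R) :
    hermAd l m n (star Ω) = star (hermAd l m n Ω) := by
  have hc : l * m ∈ unitary R := mul_mem hl hm
  have hs := star_ad_iterate (l * m) hc n Ω
  have h₁ : m * star (l * m) = star l := by
    rw [star_mul, ← mul_assoc, Unitary.mul_star_self_of_mem hm, one_mul]
  have h₂ : star (l * m) * l = star m := by
    rw [star_mul, mul_assoc, Unitary.star_mul_self_of_mem hl, mul_one]
  unfold hermAd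
  generalize (fun X => l * m * X - X * (l * m))^[n] (star Ω) = Y at *
  generalize (fun X => l * m * X - X * (l * m))^[n] Ω = Z at *
  generalize l * m = c at *
  generalize hq : n / 2 = q
  split_ifs with h
  · obtain rfl : n = q + q := by omega
    calc star c ^ q * Y * star c ^ q
        = (c ^ q * star c ^ (q + q)) * Y * (star c ^ (q + q) * c ^ q) := by
          rw [pow_mul_star_pow hc, star_pow_mul_pow hc]
      _ = star (star c ^ q * Z * star c ^ q) := by
          simp only [star_mul, star_pow, star_star, hs, mul_assoc]
  · have hn₁ : n = q + (q + 1) := by omega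
    have hn₂ : n = (q + 1) + q := by omega
    calc star l * star c ^ q * Y * star c ^ q * star m
        = (m * star c ^ (q + 1)) * Y * (star c ^ (q + 1) * l) := by
          rw [pow_succ' (star c), ← mul_assoc m, h₁, ← pow_succ', pow_succ (star c),
            mul_assoc _ (star c) l, h₂, ← mul_assoc]
      _ = m * (c ^ q * star c ^ n) * Y * ((star c ^ n * c ^ q) * l) := by
          have e₁ : c ^ q * star c ^ n = star c ^ (q + 1) := by
            rw [hn₁, pow_mul_star_pow hc]
          have e₂ : star c ^ n * c ^ q = star c ^ (q + 1) := by
            rw [hn₂, star_pow_mul_pow hc]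
          rw [e₁, e₂]
      _ = star (star l * star c ^ q * Z * star c ^ q * star m) := by
          simp only [star_mul, star_pow, star_star, hs, mul_assoc]

theorem hermAd_star {R : Type*} [Ring R] [StarRing R]
    (l m : R) (hl : l ∈ unitary R) (hm : m ∈ unitary R) :
    ∀ (n : ℕ) (Ω : R),
      hermAd l m n (star Ω) = star (hermAd l m n Ω)
      ∧ (star Ω = Ω → star (hermAd l m n Ω) = hermAd l m n Ω) := by
  intro n Ω
  have h := hermAd_star_aux l m hl hm n Ω
  exact ⟨h, fun hΩ => by rw [← h, hΩ]⟩
end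

section
/- For every k ∈ ℕ and every ι×ι complex matrix Ω, ((ad_k C)Ω)ᵀ = (−1)^k · (ad_k Cᵀ)(Ωᵀ). -/
/-! Transposition reverses products, so it turns the commutator with `A` into minus the commutator
with `Aᵀ`; iterating `k` times gives the sign `(-1) ^ k` (`transpose_iterate_ad`). The outer factors
are exchanged by the same reversal: transposition commutes with `ᴴ`, and for symmetric `L`, `M` one
has `(L * M)ᵀ = M * L`, while for odd `k` the extra factors `Lᴴ` on the left and `Mᴴ` on the right
become `Mᴴ` on the left and `Lᴴ` on the right. -/

open Matrix

/-- The Hermitian ad-operator of order `k` associated to the factorization `C = L·M`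
of a matrix into two factors: for even `k = 2q`,
`(ad_k C)Ω = (Cᴴ)^q · ((ad C)^k Ω) · (Cᴴ)^q`; for odd `k = 2q+1`,
`(ad_k C)Ω = Lᴴ · (Cᴴ)^q · ((ad C)^k Ω) · (Cᴴ)^q · Mᴴ`.
Applying it with the arguments `L, M` exchanged gives the Hermitian ad-operator
associated to `Cᵀ = M·L` (for symmetric `L`, `M`). -/
noncomputable def hermAdM {ι : Type*} [Fintype ι] [DecidableEq ι]
    (L M : Matrix ι ι ℂ) (k : ℕ) (Ω : Matrix ι ι ℂ) : Matrix ι ι ℂ :=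
  if k % 2 = 0 then
    ((L * M)ᴴ) ^ (k / 2) * ((fun X => (L * M) * X - X * (L * M))^[k] Ω)
      * ((L * M)ᴴ) ^ (k / 2)
  else
    Lᴴ * ((L * M)ᴴ) ^ (k / 2) * ((fun X => (L * M) * X - X * (L * M))^[k] Ω)
      * ((L * M)ᴴ) ^ (k / 2) * Mᴴ

/-- Each commutator contributes one sign: `(A * X - X * A)ᵀ = -(Aᵀ * Xᵀ - Xᵀ * Aᵀ)`. -/
theorem transpose_iterate_ad {ι : Type*} [Fintype ι] [DecidableEq ι] (A : Matrix ι ι ℂ) (k : ℕ) :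
    ∀ Ω : Matrix ι ι ℂ, ((fun X => A * X - X * A)^[k] Ω)ᵀ
      = (-1 : ℂ) ^ k • (fun X => Aᵀ * X - X * Aᵀ)^[k] Ωᵀ := by
  induction k with
  | zero => intro Ω; simp
  | succ k ih =>
    intro Ω
    rw [Function.iterate_succ_apply', Function.iterate_succ_apply', transpose_sub,
      transpose_mul, transpose_mul, ih]
    simp only [Matrix.smul_mul, Matrix.mul_smul, pow_succ, mul_neg, mul_one, neg_smul, smul_sub]
    abel

theorem hermAdM_transpose {ι : Type*} [Fintype ι] [DecidableEq ι]
    (L M : Matrix ι ι ℂ)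
    (hL : L * Lᴴ = 1 ∧ Lᴴ * L = 1) (hM : M * Mᴴ = 1 ∧ Mᴴ * M = 1)
    (hLs : Lᵀ = L) (hMs : Mᵀ = M) :
    ∀ (k : ℕ) (Ω : Matrix ι ι ℂ),
      (hermAdM L M k Ω)ᵀ = (-1 : ℂ) ^ k • hermAdM M L k Ωᵀ := by
  intro k Ω
  have transpose_conjTranspose (A : Matrix ι ι ℂ) : (Aᴴ)ᵀ = (Aᵀ)ᴴ := rfl
  have hC : (L * M)ᵀ = M * L := by rw [transpose_mul, hLs, hMs]
  unfold hermAdM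
  split_ifs
  · rw [transpose_mul, transpose_mul, transpose_pow, transpose_conjTranspose,
      transpose_iterate_ad, hC]
    simp only [Matrix.smul_mul, Matrix.mul_smul, Matrix.mul_assoc]
  · rw [transpose_mul, transpose_mul, transpose_mul, transpose_mul, transpose_pow,
      transpose_conjTranspose, transpose_conjTranspose, transpose_conjTranspose,
      transpose_iterate_ad, hC, hLs, hMs]
    simp only [Matrix.smul_mul, Matrix.mul_smul, Matrix.mul_assoc]
end

section
/- For every k ∈ ℕ and every ι×ι complex matrix Ω: if k is even then (ad_k C)(L·Ω·M) = L·((ad_k Cᵀ)Ω)·M, and if k is odd then (ad_k C)(L·Ω·M) = M·((ad_k Cᵀ)Ω)·L. -/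
/-!
Write `C = L * M` and `D = M * L`. From `C * L = L * D` and `M * C = D * M` the map
`Ω ↦ L * Ω * M` intertwines `ad D` with `ad C`, hence also their iterates
(`iterate_ad_mul_mul`). Unitarity gives the same intertwining for the adjoints,
`Cᴴ * L = Mᴴ = L * Dᴴ` and `M * Cᴴ = Lᴴ = Dᴴ * M` (`semiconjBy_left`, `semiconjBy_right`), so
powers of `Cᴴ` move past `L` and `M` and become powers of `Dᴴ`. This is the even case. In the odd
case the outer factors cancel, and both sides equal `(Dᴴ)^q * (ad D)^k Ω * (Dᴴ)^q`.
-/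

open Matrix

theorem iterate_ad_mul_mul {R : Type*} [Ring R] (L M : R) (k : ℕ) (Ω : R) :
    (fun X => (L * M) * X - X * (L * M))^[k] (L * Ω * M)
      = L * (fun X => (M * L) * X - X * (M * L))^[k] Ω * M := by
  have h : Function.Semiconj (fun X => L * X * M)
      (fun X => (M * L) * X - X * (M * L)) (fun X => (L * M) * X - X * (L * M)) := by
    intro X
    simp only [mul_sub, sub_mul, mul_assoc]
  exact ((h.iterate_right k) Ω).symm

theorem semiconjBy_left {ι : Type*} [Fintype ι] [DecidableEq ι] {L : Matrix ι ι ℂ}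
    (M : Matrix ι ι ℂ) (hL : L * Lᴴ = 1 ∧ Lᴴ * L = 1) :
    SemiconjBy L (M * L)ᴴ (L * M)ᴴ := by
  rw [SemiconjBy, conjTranspose_mul, conjTranspose_mul, ← mul_assoc, hL.1, mul_assoc, hL.2,
    one_mul, mul_one]

theorem semiconjBy_right {ι : Type*} [Fintype ι] [DecidableEq ι] (L : Matrix ι ι ℂ)
    {M : Matrix ι ι ℂ} (hM : M * Mᴴ = 1 ∧ Mᴴ * M = 1) :
    SemiconjBy M (L * M)ᴴ (M * L)ᴴ :=
  semiconjBy_left L hM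

theorem hermAdM_conjugation {ι : Type*} [Fintype ι] [DecidableEq ι]
    (L M : Matrix ι ι ℂ)
    (hL : L * Lᴴ = 1 ∧ Lᴴ * L = 1) (hM : M * Mᴴ = 1 ∧ Mᴴ * M = 1)
    (hLs : Lᵀ = L) (hMs : Mᵀ = M) :
    ∀ (k : ℕ) (Ω : Matrix ι ι ℂ),
      (k % 2 = 0 → hermAdM L M k (L * Ω * M) = L * hermAdM M L k Ω * M)
      ∧ (k % 2 = 1 → hermAdM L M k (L * Ω * M) = M * hermAdM M L k Ω * L) := by
  intro k Ω
  have h1 := ((semiconjBy_left M hL).pow_right (k / 2)).eq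
  have h2 := ((semiconjBy_right L hM).pow_right (k / 2)).eq
  have h3 := iterate_ad_mul_mul L M k Ω
  unfold hermAdM
  rw [h3]
  generalize (fun X => (M * L) * X - X * (M * L))^[k] Ω = Y
  generalize ((L * M)ᴴ) ^ (k / 2) = P at *
  generalize ((M * L)ᴴ) ^ (k / 2) = Q at *
  have key : P * (L * Y * M) * P = L * (Q * Y * Q) * M := by
    calc P * (L * Y * M) * P = (P * L) * Y * (M * P) := by simp only [mul_assoc]
      _ = L * (Q * Y * Q) * M := by rw [← h1, h2]; simp only [mul_assoc]
  refine ⟨fun hk => ?_, fun hk => ?_⟩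
  · rw [if_pos hk, if_pos hk, key]
  · have hk' : ¬ k % 2 = 0 := by omega
    rw [if_neg hk', if_neg hk']
    calc Lᴴ * P * (L * Y * M) * P * Mᴴ = Lᴴ * (P * (L * Y * M) * P) * Mᴴ := by
          simp only [mul_assoc]
      _ = (Lᴴ * L) * (Q * Y * Q) * (M * Mᴴ) := by rw [key]; simp only [mul_assoc]
      _ = (M * Mᴴ) * (Q * Y * Q) * (Lᴴ * L) := by rw [hL.2, hM.1]
      _ = M * (Mᴴ * Q * Y * Q * Lᴴ) * L := by simp only [mul_assoc]
end

section
/- For all natural numbers k ≤ n and every ι×ι complex matrix Ω, (ad_n C)Ω = (ad_{n−k} C(k))((ad_k C)Ω), where C(k) = C if k is even and C(k) = Cᵀ if k is odd (with the convention (ad_0 A)Ω = Ω). -/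
/-!
Write `T L M X = M X Mᴴ - Lᴴ X L` (`hermStep`), which for unitary `L`, `M` equals
`Lᴴ (C X - X C) Mᴴ` with `C = L M`, i.e. the Hermitian ad-operator of order one. As `Cᴴ = C⁻¹`
commutes with `C`, the outer powers of `Cᴴ` pass through `ad C`, and the Hermitian ad-operators
satisfy the recursion
`ad_{k+1} = T L M ∘ ad_k` for even `k` and `ad_{k+1} = T M L ∘ ad_k` for odd `k`
(`hermAdM_succ_even`, `hermAdM_succ_odd`). So `ad_n` is an alternating composition of `n` maps
`T L M`, `T M L`, starting with `T L M`; cutting it after `k` factors leaves an alternating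
composition of `n - k` maps that starts with `T L M` or `T M L` according to the parity of `k`.
-/

open Matrix

/-- The Hermitian ad-operator of order one for `C = L * M`, in the form it takes for
unitary `L`, `M`. -/
noncomputable def hermStep {ι : Type*} [Fintype ι]
    (L M X : Matrix ι ι ℂ) : Matrix ι ι ℂ :=
  M * X * Mᴴ - Lᴴ * X * L

lemma hermAdM_zero {ι : Type*} [Fintype ι] [DecidableEq ι] (L M Ω : Matrix ι ι ℂ) :
    hermAdM L M 0 Ω = Ω := by
  simp [hermAdM]

lemma commutator_sandwich {R : Type*} [Ring R] {P C : R} (h : Commute P C) (X : R) :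
    P * (C * X - X * C) * P = C * (P * X * P) - P * X * P * C := by
  have h1 : P * (C * X) * P = C * (P * X * P) := by
    rw [← mul_assoc, h.eq]; simp only [mul_assoc]
  have h2 : P * (X * C) * P = P * X * P * C := by
    simp only [mul_assoc]; rw [h.eq]
  rw [mul_sub, sub_mul, h1, h2]

lemma commute_conjTranspose_pow {ι : Type*} [Fintype ι] [DecidableEq ι]
    {L M : Matrix ι ι ℂ}
    (hL : L * Lᴴ = 1 ∧ Lᴴ * L = 1) (hM : M * Mᴴ = 1 ∧ Mᴴ * M = 1) (q : ℕ) :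
    Commute (((L * M)ᴴ) ^ q) (L * M) := by
  apply Commute.pow_left
  have h1 : (L * M)ᴴ * (L * M) = 1 := by
    rw [conjTranspose_mul, mul_assoc, ← mul_assoc Lᴴ, hL.2, one_mul, hM.2]
  have h2 : (L * M) * (L * M)ᴴ = 1 := by
    rw [conjTranspose_mul, mul_assoc, ← mul_assoc M, hM.1, one_mul, hL.1]
  exact h1.trans h2.symm

lemma hermAdM_succ_even {ι : Type*} [Fintype ι] [DecidableEq ι]
    {L M : Matrix ι ι ℂ}
    (hL : L * Lᴴ = 1 ∧ Lᴴ * L = 1) (hM : M * Mᴴ = 1 ∧ Mᴴ * M = 1)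
    {k : ℕ} (hk : k % 2 = 0) (Ω : Matrix ι ι ℂ) :
    hermAdM L M (k + 1) Ω = hermStep L M (hermAdM L M k Ω) := by
  have hk1 : ¬ (k + 1) % 2 = 0 := by omega
  have hq : (k + 1) / 2 = k / 2 := by omega
  simp only [hermAdM, if_pos hk, if_neg hk1, hq, Function.iterate_succ_apply']
  generalize (fun X => (L * M) * X - X * (L * M))^[k] Ω = X
  have hs := commutator_sandwich (commute_conjTranspose_pow hL hM (k / 2)) X
  generalize ((L * M)ᴴ) ^ (k / 2) = P at hs ⊢
  calc Lᴴ * P * (L * M * X - X * (L * M)) * P * Mᴴ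
      = Lᴴ * (P * (L * M * X - X * (L * M)) * P) * Mᴴ := by simp only [mul_assoc]
    _ = (Lᴴ * L) * M * (P * X * P) * Mᴴ - Lᴴ * (P * X * P) * L * (M * Mᴴ) := by
        rw [hs]; noncomm_ring
    _ = hermStep L M (P * X * P) := by
        rw [hL.2, hM.1, one_mul, mul_one, hermStep]

lemma hermAdM_succ_odd {ι : Type*} [Fintype ι] [DecidableEq ι]
    {L M : Matrix ι ι ℂ}
    (hL : L * Lᴴ = 1 ∧ Lᴴ * L = 1) (hM : M * Mᴴ = 1 ∧ Mᴴ * M = 1)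
    {k : ℕ} (hk : ¬ k % 2 = 0) (Ω : Matrix ι ι ℂ) :
    hermAdM L M (k + 1) Ω = hermStep M L (hermAdM L M k Ω) := by
  have hk1 : (k + 1) % 2 = 0 := by omega
  have hq : (k + 1) / 2 = k / 2 + 1 := by omega
  simp only [hermAdM, if_neg hk, if_pos hk1, hq, Function.iterate_succ_apply']
  generalize (fun X => (L * M) * X - X * (L * M))^[k] Ω = X
  have hs := commutator_sandwich (commute_conjTranspose_pow hL hM (k / 2)) X
  -- One factor `Cᴴ` goes outside on each side; the remaining powers sandwich `X`.
  nth_rewrite 1 [pow_succ']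
  rw [pow_succ, conjTranspose_mul]
  rw [conjTranspose_mul] at hs
  generalize (Mᴴ * Lᴴ) ^ (k / 2) = P at hs ⊢
  calc Mᴴ * Lᴴ * P * (L * M * X - X * (L * M)) * (P * (Mᴴ * Lᴴ))
      = Mᴴ * Lᴴ * (P * (L * M * X - X * (L * M)) * P) * (Mᴴ * Lᴴ) := by
        simp only [mul_assoc]
    _ = Mᴴ * (Lᴴ * L) * M * (P * X * P) * Mᴴ * Lᴴ
          - Mᴴ * Lᴴ * (P * X * P) * L * (M * Mᴴ) * Lᴴ := by
        rw [hs]; noncomm_ring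
    _ = P * X * P * Mᴴ * Lᴴ - Mᴴ * Lᴴ * (P * X * P) := by
        rw [hL.2, hM.1, mul_one, mul_one, hM.2, one_mul, mul_assoc _ L, hL.1, mul_one]
    _ = (L * Lᴴ) * (P * X * P) * Mᴴ * Lᴴ - Mᴴ * Lᴴ * (P * X * P) * (Mᴴ * M) := by
        rw [hL.1, hM.2, one_mul, mul_one]
    _ = hermStep M L (Lᴴ * P * X * P * Mᴴ) := by
        simp only [hermStep, mul_assoc]

theorem hermAdM_factorization {ι : Type*} [Fintype ι] [DecidableEq ι]
    (L M : Matrix ι ι ℂ)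
    (hL : L * Lᴴ = 1 ∧ Lᴴ * L = 1) (hM : M * Mᴴ = 1 ∧ Mᴴ * M = 1)
    (hLs : Lᵀ = L) (hMs : Mᵀ = M) :
    ∀ (n k : ℕ), k ≤ n → ∀ Ω : Matrix ι ι ℂ,
      hermAdM L M n Ω =
        if k % 2 = 0 then hermAdM L M (n - k) (hermAdM L M k Ω)
        else hermAdM M L (n - k) (hermAdM L M k Ω) := by
  intro n k hkn Ω
  obtain ⟨j, rfl⟩ := Nat.exists_eq_add_of_le hkn
  rw [Nat.add_sub_cancel_left]
  clear hkn
  induction j with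
  | zero => simp [hermAdM_zero]
  | succ j ih =>
    rw [← add_assoc]
    by_cases hk : k % 2 = 0 <;> by_cases hj : j % 2 = 0
    · rw [if_pos hk] at ih ⊢
      rw [hermAdM_succ_even hL hM (by omega), hermAdM_succ_even hL hM hj, ih]
    · rw [if_pos hk] at ih ⊢
      rw [hermAdM_succ_odd hL hM (by omega), hermAdM_succ_odd hL hM hj, ih]
    · rw [if_neg hk] at ih ⊢
      rw [hermAdM_succ_odd hL hM (by omega), hermAdM_succ_even hM hL hj, ih]
    · rw [if_neg hk] at ih ⊢
      rw [hermAdM_succ_even hL hM (by omega), hermAdM_succ_odd hM hL hj, ih]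
end

section
/- Let r ∈ ℕ and let D_0, ..., D_r : ℂ → ℂ be functions. Suppose that for every Laurent polynomial p there exists a Laurent polynomial q such that Σ_{k=0}^r D_k(z)·p^{(k)}(z) = q(z) for all z ∈ ℂ with z ≠ 0. Then for each k with 0 ≤ k ≤ r there exists a Laurent polynomial E_k such that D_k(z) = E_k(z) for all z ∈ ℂ with z ≠ 0. -/
/-- The function `f` agrees with a Laurent polynomial on the punctured plane. -/
def IsLaurent (f : ℂ → ℂ) : Prop := ∃ E : ℤ →₀ ℂ, ∀ z : ℂ, z ≠ 0 → f z = lval E z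

lemma lval_add (a b : ℤ →₀ ℂ) (z : ℂ) : lval (a + b) z = lval a z + lval b z :=
  Finsupp.sum_add_index' (fun _ => zero_mul _) (fun _ _ _ => add_mul _ _ _)

lemma IsLaurent.add {f g : ℂ → ℂ} (hf : IsLaurent f) (hg : IsLaurent g) :
    IsLaurent (fun z => f z + g z) := by
  obtain ⟨a, ha⟩ := hf
  obtain ⟨b, hb⟩ := hg
  exact ⟨a + b, fun z hz => by simp only [lval_add, ha z hz, hb z hz]⟩

lemma IsLaurent.monomial_mul {f : ℂ → ℂ} (hf : IsLaurent f) (c : ℂ) (n : ℕ) :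
    IsLaurent (fun z => c * z ^ n * f z) := by
  obtain ⟨a, ha⟩ := hf
  refine ⟨(c • a).mapDomain (· + (n : ℤ)), fun z hz => ?_⟩
  beta_reduce
  rw [ha z hz, lval, lval, Finsupp.sum_mapDomain_index (fun _ => zero_mul _)
    (fun _ _ _ => add_mul _ _ _), Finsupp.sum_smul_index (fun _ => zero_mul _), Finsupp.mul_sum]
  refine Finsupp.sum_congr fun i _ => ?_
  rw [zpow_add₀ hz, zpow_natCast]
  ring

lemma IsLaurent.sum {f : ℕ → ℂ → ℂ} (s : Finset ℕ) (hf : ∀ j ∈ s, IsLaurent (f j)) :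
    IsLaurent (fun z => ∑ j ∈ s, f j z) := by
  induction s using Finset.induction_on with
  | empty => exact ⟨0, fun z _ => by simp [lval]⟩
  | insert j s hj ih =>
    simp only [Finset.sum_insert hj]
    exact (hf j (Finset.mem_insert_self j s)).add
      (ih fun i hi => hf i (Finset.mem_insert_of_mem hi))

/-- For `j > k` the exponent `k - j` is truncated, but the descending factorial is then `0`. -/
lemma iteratedDeriv_lval_single (j k : ℕ) (z : ℂ) :
    iteratedDeriv j (lval (Finsupp.single (k : ℤ) 1)) z =
      (k.descFactorial j : ℂ) * z ^ (k - j) := by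
  have h : lval (Finsupp.single (k : ℤ) 1) = fun z => z ^ k := by
    funext z
    simp [lval]
  rw [h, iteratedDeriv_pow]

/-- If `Σ_{k=0}^r D_k(z)·p^{(k)}(z)` is a Laurent polynomial in `z ≠ 0` for every
Laurent polynomial `p`, then each coefficient `D_k` agrees with a Laurent polynomial
on `ℂ \ {0}`. -/
theorem coeffs_of_laurent_preserving_operator
    (r : ℕ) (D : ℕ → ℂ → ℂ)
    (h : ∀ p : ℤ →₀ ℂ, ∃ q : ℤ →₀ ℂ, ∀ z : ℂ, z ≠ 0 →
      ∑ k ∈ Finset.range (r + 1), D k z * iteratedDeriv k (lval p) z = lval q z) :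
    ∀ k : ℕ, k ≤ r → ∃ E : ℤ →₀ ℂ, ∀ z : ℂ, z ≠ 0 → D k z = lval E z := by
  intro k
  induction k using Nat.strong_induction_on with
  | _ k ih =>
  intro hk
  have hP : IsLaurent (fun z => ∑ j ∈ Finset.range (r + 1),
      D j z * iteratedDeriv j (lval (Finsupp.single (k : ℤ) 1)) z) := h _
  have hlow : IsLaurent (fun z => ∑ j ∈ Finset.range k,
      (k.descFactorial j : ℂ) * z ^ (k - j) * D j z) :=
    IsLaurent.sum _ fun j hj =>
      have hjk := Finset.mem_range.1 hj
      IsLaurent.monomial_mul (ih j hjk (hjk.le.trans hk)) _ _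
  have hfac : (k.factorial : ℂ) ≠ 0 := by exact_mod_cast k.factorial_ne_zero
  -- `D k` is recovered as `(k!)⁻¹ * (P (z^k) - lower-order terms)`.
  obtain ⟨E, hE⟩ := (hP.add (hlow.monomial_mul (-1) 0)).monomial_mul (k.factorial : ℂ)⁻¹ 0
  refine ⟨E, fun z hz => ?_⟩
  have hsum : ∑ j ∈ Finset.range (r + 1),
      D j z * iteratedDeriv j (lval (Finsupp.single (k : ℤ) 1)) z =
      ∑ j ∈ Finset.range (k + 1), (k.descFactorial j : ℂ) * z ^ (k - j) * D j z := by
    simp only [iteratedDeriv_lval_single]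
    symm
    refine Finset.sum_subset_zero_on_sdiff (Finset.range_mono (by omega)) (fun j hj => ?_)
      (fun j _ => mul_comm _ _)
    have hjk : k < j := by simp at hj; omega
    simp [Nat.descFactorial_of_lt hjk]
  rw [← hE z hz]
  simp only [hsum, Finset.sum_range_succ, Nat.descFactorial_self, Nat.sub_self, pow_zero]
  field_simp
  ring
end
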